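/- Quadratic-form dissipation inequality (2.16): Let n ≥ 2 be an integer, μ > 0 and λ real with 2μ + nλ > 0, and β = 2μ + λ. Then there exists a constant C > 0, depending only on μ, λ and n, such that for all real numbers a and b: β(a + (n−1)b)² − 2μ(n−1)(2ab + (n−2)b²) ≥ C(a² + b²). In particular, for a = r^{n−1}u_x and b = r^{−1}vu (using the identities (r^{n−1}u)_x = r^{n−1}u_x + (n−1)r^{−1}vu and v(r^{n−2}u²)_x = 2(r^{n−1}u_x)(r^{−1}vu) + (n−2)(r^{−1}vu)², valid when r^{n−1}r_x = v), one has β((r^{n−1}u)_x)² − 2μ(n−1)v(r^{n−2}u²)_x ≥ C(r^{−2}v²u² + r^{2(n−1)}u_x²). -/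

import Mathlib

open Real

/-!
The left-hand side equals `2μ(a² + (N-1)b²) + λ(a + (N-1)b)²`: it is `2μ|D|² + λ(tr D)²` for the
diagonal matrix `D = diag(a, b, …, b)`. By Cauchy–Schwarz `0 ≤ (tr D)² ≤ N|D|²`, so the form is at
least `2μ|D|²` when `λ ≥ 0` and at least `(2μ + Nλ)|D|²` when `λ ≤ 0`.
-/

section OrderedRing

variable {R : Type*} [CommRing R]

theorem dissipation_eq_sq_norm_add_sq_trace (N μ lam a b : R) :
    (2 * μ + lam) * (a + (N - 1) * b) ^ 2 - 2 * μ * (N - 1) * (2 * a * b + (N - 2) * b ^ 2) =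
      2 * μ * (a ^ 2 + (N - 1) * b ^ 2) + lam * (a + (N - 1) * b) ^ 2 := by
  ring

variable [LinearOrder R] [IsStrictOrderedRing R]

theorem weighted_add_sq_le {p q : R} (hp : 0 ≤ p) (hq : 0 ≤ q) (a b : R) :
    (p * a + q * b) ^ 2 ≤ (p + q) * (p * a ^ 2 + q * b ^ 2) := by
  have hdefect : (p + q) * (p * a ^ 2 + q * b ^ 2) - (p * a + q * b) ^ 2 =
      p * q * (a - b) ^ 2 := by ring
  have hdefect_nonneg : 0 ≤ p * q * (a - b) ^ 2 := by positivity
  exact sub_nonneg.mp (hdefect ▸ hdefect_nonneg)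

theorem min_mul_le_mul_add_mul {N s t : R} (hs : 0 ≤ s) (ht : 0 ≤ t) (hts : t ≤ N * s)
    (c lam : R) : min c (c + N * lam) * s ≤ c * s + lam * t := by
  rcases le_total 0 lam with hlam | hlam
  · calc min c (c + N * lam) * s ≤ c * s := by gcongr; exact min_le_left _ _
      _ ≤ c * s + lam * t := le_add_of_nonneg_right (mul_nonneg hlam ht)
  · calc min c (c + N * lam) * s ≤ (c + N * lam) * s := by gcongr; exact min_le_right _ _
      _ = c * s + lam * (N * s) := by ring
      _ ≤ c * s + lam * t := by gcongr c * s + ?_; exact mul_le_mul_of_nonpos_left hts hlam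

theorem min_one_mul_add_sq_le (m a b : R) :
    min 1 m * (a ^ 2 + b ^ 2) ≤ a ^ 2 + m * b ^ 2 :=
  calc min 1 m * (a ^ 2 + b ^ 2) = min 1 m * a ^ 2 + min 1 m * b ^ 2 := mul_add _ _ _
    _ ≤ 1 * a ^ 2 + m * b ^ 2 := by
      gcongr
      exacts [min_le_left _ _, min_le_right _ _]
    _ = a ^ 2 + m * b ^ 2 := by rw [one_mul]

theorem min_mul_sq_norm_le_dissipation {N : R} (hN : 1 ≤ N) (μ lam a b : R) :
    min (2 * μ) (2 * μ + N * lam) * (a ^ 2 + (N - 1) * b ^ 2) ≤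
      (2 * μ + lam) * (a + (N - 1) * b) ^ 2
        - 2 * μ * (N - 1) * (2 * a * b + (N - 2) * b ^ 2) := by
  have hm : 0 ≤ N - 1 := sub_nonneg.mpr hN
  have cauchy_schwarz : (a + (N - 1) * b) ^ 2 ≤ N * (a ^ 2 + (N - 1) * b ^ 2) := by
    simpa only [one_mul, add_sub_cancel] using weighted_add_sq_le zero_le_one hm a b
  rw [dissipation_eq_sq_norm_add_sq_trace]
  exact min_mul_le_mul_add_mul (by positivity) (sq_nonneg _) cauchy_schwarz _ _

theorem exists_pos_mul_add_sq_le_dissipation {N μ lam : R} (hN : 1 < N) (hμ : 0 < μ)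
    (hlam : 0 < 2 * μ + N * lam) :
    ∃ C > 0, ∀ a b : R,
      C * (a ^ 2 + b ^ 2) ≤
        (2 * μ + lam) * (a + (N - 1) * b) ^ 2
          - 2 * μ * (N - 1) * (2 * a * b + (N - 2) * b ^ 2) := by
  have hc : 0 < min (2 * μ) (2 * μ + N * lam) := lt_min (by positivity) hlam
  have hm : 0 < min 1 (N - 1) := lt_min one_pos (sub_pos.mpr hN)
  refine ⟨min (2 * μ) (2 * μ + N * lam) * min 1 (N - 1), mul_pos hc hm, fun a b => ?_⟩
  rw [mul_assoc]
  exact (mul_le_mul_of_nonneg_left (min_one_mul_add_sq_le _ a b) hc.le).trans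
    (min_mul_sq_norm_le_dissipation hN.le μ lam a b)

end OrderedRing

/-- The dimension `N` need not be an integer; `ρ` plays the role of the weight `r^{N-1}`. -/
theorem quadratic_dissipation_general {K : Type*} [Field K] [LinearOrder K]
    [IsStrictOrderedRing K] {N μ lam : K} (hN : 1 < N) (hμ : 0 < μ)
    (hlam : 0 < 2 * μ + N * lam) :
    ∃ C > 0,
      (∀ a b : K,
        (2 * μ + lam) * (a + (N - 1) * b) ^ 2
          - 2 * μ * (N - 1) * (2 * a * b + (N - 2) * b ^ 2)
        ≥ C * (a ^ 2 + b ^ 2)) ∧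
      (∀ r ρ v u ux w₁ w₂ : K, r ≠ 0 →
        w₁ = ρ * ux + (N - 1) * (v * u / r) →
        v * w₂ = 2 * (ρ * ux) * (v * u / r) + (N - 2) * (v * u / r) ^ 2 →
        (2 * μ + lam) * w₁ ^ 2 - 2 * μ * (N - 1) * (v * w₂)
          ≥ C * (v ^ 2 * u ^ 2 / r ^ 2 + ρ ^ 2 * ux ^ 2)) := by
  obtain ⟨C, hC, hcoercive⟩ := exists_pos_mul_add_sq_le_dissipation hN hμ hlam
  refine ⟨C, hC, hcoercive, fun r ρ v u ux w₁ w₂ _ hw₁ hw₂ => ?_⟩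
  have hsquares : v ^ 2 * u ^ 2 / r ^ 2 + ρ ^ 2 * ux ^ 2 = (ρ * ux) ^ 2 + (v * u / r) ^ 2 := by
    ring
  rw [hw₁, hw₂, hsquares]
  exact hcoercive (ρ * ux) (v * u / r)

/-- Quadratic-form dissipation inequality (2.16): for `n ≥ 2`, `μ > 0`,
`2μ + nλ > 0` and `β = 2μ + λ`, there is `C > 0` depending only on `μ, λ, n`
with `β(a + (n-1)b)² - 2μ(n-1)(2ab + (n-2)b²) ≥ C(a² + b²)` for all reals
`a, b`.  In particular, with `a = r^{n-1}u_x` and `b = r⁻¹vu`, for any `w₁, w₂`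
satisfying the identities `w₁ = (r^{n-1}u)_x = r^{n-1}u_x + (n-1)r⁻¹vu` and
`v·w₂ = v(r^{n-2}u²)_x = 2(r^{n-1}u_x)(r⁻¹vu) + (n-2)(r⁻¹vu)²` one has
`βw₁² - 2μ(n-1)v·w₂ ≥ C(r⁻²v²u² + r^{2(n-1)}u_x²)`. -/
theorem quadratic_dissipation (n : ℕ) (hn : 2 ≤ n) (μ lam : ℝ)
    (hμ : 0 < μ) (hlam : 0 < 2 * μ + (n : ℝ) * lam) :
    ∃ C > (0:ℝ),
      (∀ a b : ℝ,
        (2 * μ + lam) * (a + ((n : ℝ) - 1) * b) ^ 2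
          - 2 * μ * ((n : ℝ) - 1) * (2 * a * b + ((n : ℝ) - 2) * b ^ 2)
        ≥ C * (a ^ 2 + b ^ 2)) ∧
      (∀ r v u ux w₁ w₂ : ℝ, r ≠ 0 →
        w₁ = r ^ (n - 1) * ux + ((n : ℝ) - 1) * (v * u / r) →
        v * w₂ = 2 * (r ^ (n - 1) * ux) * (v * u / r)
          + ((n : ℝ) - 2) * (v * u / r) ^ 2 →
        (2 * μ + lam) * w₁ ^ 2 - 2 * μ * ((n : ℝ) - 1) * (v * w₂)
          ≥ C * (v ^ 2 * u ^ 2 / r ^ 2 + (r ^ (n - 1)) ^ 2 * ux ^ 2)) := by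
  obtain ⟨C, hC, hform, hflow⟩ := quadratic_dissipation_general (Nat.one_lt_cast.mpr hn) hμ hlam
  exact ⟨C, hC, hform, fun r => hflow r (r ^ (n - 1))⟩
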